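/- Let ϑ, ϑ₁, ϑ₂ be Beurling weights on ℝ^d and 1 ≤ p, q, r < ∞. Then A^{p,1,q,r}_{ϑ₁,ϑ}(ℝ^d) = A^{p,1,q,r}_{ϑ₂,ϑ}(ℝ^d) (equality of sets) if and only if the weights ϑ₁ and ϑ₂ are equivalent, i.e. ϑ₁ ≺ ϑ₂ and ϑ₂ ≺ ϑ₁. -/

import Mathlib

open MeasureTheory Filter Topology
open scoped ENNReal NNReal BigOperators

noncomputable section

/-- The unit cube `α + [0,1)^d` at the integer point `α ∈ ℤ^d`. -/
def cube {d : ℕ} (α : Fin d → ℤ) : Set (Fin d → ℝ) :=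
  Set.univ.pi fun i => Set.Ico (α i : ℝ) ((α i : ℝ) + 1)

/-- The weighted amalgam norm `‖f‖_{pq,ω}` of the space `(L^p_ω, ℓ^q)`. -/
def amalgamNorm {d : ℕ} (p q : ℝ) (ω : (Fin d → ℝ) → ℝ) (f : (Fin d → ℝ) → ℂ) : ℝ≥0∞ :=
  (∑' α : Fin d → ℤ,
      (eLpNorm (fun x => ω x • f x) (ENNReal.ofReal p) (volume.restrict (cube α))) ^ q) ^ (1 / q)

/-- Membership in the weighted amalgam space `(L^p_ω, ℓ^q)`. -/
def MemAmalgam {d : ℕ} (p q : ℝ) (ω : (Fin d → ℝ) → ℝ) (f : (Fin d → ℝ) → ℂ) : Prop :=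
  Measurable f ∧ amalgamNorm p q ω f < ⊤

/-- A Beurling weight: measurable, `ϑ ≥ 1` and submultiplicative. -/
def IsBeurling {d : ℕ} (ϑ : (Fin d → ℝ) → ℝ) : Prop :=
  Measurable ϑ ∧ (∀ x, 1 ≤ ϑ x) ∧ ∀ x y, ϑ (x + y) ≤ ϑ x * ϑ y

/-- The Fourier transform `f̂(ξ) = ∫ f(x) e^{-2πi⟨x,ξ⟩} dx`. -/
def fourierT {d : ℕ} (f : (Fin d → ℝ) → ℂ) (ξ : Fin d → ℝ) : ℂ :=
  ∫ x : Fin d → ℝ,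
    Complex.exp (-(2 * (Real.pi : ℂ) * Complex.I * ∑ i, (x i : ℂ) * (ξ i : ℂ))) * f x

/-- The norm of `A^{p,1,q,r}_{ϑ₁,ϑ₂}(ℝ^d)`. -/
def ANorm {d : ℕ} (p q r : ℝ) (ϑ₁ ϑ₂ : (Fin d → ℝ) → ℝ) (f : (Fin d → ℝ) → ℂ) : ℝ≥0∞ :=
  amalgamNorm p 1 ϑ₁ f + amalgamNorm q r ϑ₂ (fourierT f)

/-- Membership in `A^{p,1,q,r}_{ϑ₁,ϑ₂}(ℝ^d)`. -/
def MemA {d : ℕ} (p q r : ℝ) (ϑ₁ ϑ₂ : (Fin d → ℝ) → ℝ) (f : (Fin d → ℝ) → ℂ) : Prop :=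
  MemAmalgam p 1 ϑ₁ f ∧ MemAmalgam q r ϑ₂ (fourierT f)

/-- Convolution `(f∗g)(x) = ∫ f(x−t)g(t) dt`. -/
def convF {d : ℕ} (f g : (Fin d → ℝ) → ℂ) (x : Fin d → ℝ) : ℂ :=
  ∫ t : Fin d → ℝ, f (x - t) * g t

/-- `ϑ ≺ ϑ'` : domination of weights up to a constant. -/
def Prec {d : ℕ} (ϑ ϑ' : (Fin d → ℝ) → ℝ) : Prop :=
  ∃ C : ℝ, 0 < C ∧ ∀ x, ϑ x ≤ C * ϑ' x

/-- The Beurling–Domar condition `∑_{n≥1} log ϑ(nx)/n² < ∞`. -/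
def BeurlingDomar {d : ℕ} (ϑ : (Fin d → ℝ) → ℝ) : Prop :=
  ∀ x : Fin d → ℝ, Summable fun n : ℕ => Real.log (ϑ ((n : ℝ) • x)) / (n : ℝ) ^ 2

/-- `w` does not tend to zero as `|x| → ∞`. -/
def NotVanishingAtInfty {d : ℕ} (w : (Fin d → ℝ) → ℝ) : Prop :=
  ∃ δ : ℝ, 0 < δ ∧ ∀ R : ℝ, 0 < R → ∃ x : Fin d → ℝ, R < ‖x‖ ∧ δ ≤ w x

end

/-! If `ϑ₂` is not dominated by `ϑ₁`, there are points `X n` with `ϑ₂ (X n) > 4 ^ n * ϑ₁ (X n)`.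
Put a translate of the Gaussian `exp (-π |x|²)` at each `X n`, with coefficient
`c n = 2⁻ⁿ / ϑ₁ (X n)`. Weights grow at most exponentially and Gaussians decay faster, so the
amalgam norm of the sum `f` for `ϑ₁` is controlled by `∑ c n * ϑ₁ (X n) < ∞`, whereas the one for
`ϑ₂` dominates every `c n * ϑ₂ (X n) > 2 ^ n`. Translating only multiplies the Fourier transform
by a phase, so `|f̂|` is at most `(∑ c n) * exp (-π |ξ|²)`, which lies in every weighted amalgam
space. Hence `f` belongs to the space of `ϑ₁` and not to that of `ϑ₂`. -/

/-! ### Weights of exponential growth -/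

section Weights

variable {d : ℕ} {w ϑ ϑ₁ ϑ₂ : (Fin d → ℝ) → ℝ}

/-- A weight of at most exponential growth: the class of weights allowed on the Fourier side. -/
structure IsExpWeight (w : (Fin d → ℝ) → ℝ) : Prop where
  measurable : Measurable w
  pos : ∀ x, 0 < w x
  exists_le_exp : ∃ A B : ℝ≥0, ∀ x, w x ≤ A * Real.exp (B * ‖x‖)

/-- A moderate weight: a translation changes it at most by a factor of exponential growth. As in
the case of Beurling weights, it is normalised by `1 ≤ w`, which makes `(L^p_w, ℓ¹)` a subspace of
`L¹`. -/
structure IsModerateWeight (w : (Fin d → ℝ) → ℝ) : Prop where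
  measurable : Measurable w
  one_le : ∀ x, 1 ≤ w x
  exists_add_le_mul : ∃ v, IsExpWeight v ∧ ∀ x y, w (x + y) ≤ w x * v y

lemma IsModerateWeight.pos (hw : IsModerateWeight w) (x : Fin d → ℝ) : 0 < w x :=
  one_pos.trans_le (hw.one_le x)

lemma IsModerateWeight.summable_of_summable_mul {ι : Type*} {c : ι → ℝ≥0} {X : ι → Fin d → ℝ}
    (hw : IsModerateWeight w) (h : Summable fun n => c n * w (X n)) : Summable c :=
  NNReal.summable_coe.1 <| h.of_nonneg_of_le (fun n => (c n).coe_nonneg)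
    fun n => le_mul_of_one_le_right (c n).coe_nonneg (hw.one_le _)

namespace IsBeurling

lemma succ_nsmul_le_pow (hϑ : IsBeurling ϑ) (y : Fin d → ℝ) (n : ℕ) :
    ϑ ((n + 1) • y) ≤ ϑ y ^ (n + 1) := by
  have hϑy := hϑ.2.1 y
  induction n with
  | zero => simp
  | succ n ih =>
    rw [succ_nsmul, pow_succ]
    exact (hϑ.2.2 _ _).trans (by gcongr)

-- By Steinhaus, `E - E` is a neighbourhood of `0` when `E` has positive measure; take for `E` a set
-- on which both `ϑ x` and `ϑ (-x)` are bounded.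
lemma exists_forall_mem_ball_le (hϑ : IsBeurling ϑ) :
    ∃ M ε : ℝ, 0 < ε ∧ ∀ x ∈ Metric.ball 0 ε, ϑ x ≤ M := by
  let E : ℕ → Set (Fin d → ℝ) := fun n => {x | ϑ x ≤ n} ∩ {x | ϑ (-x) ≤ n}
  have measurableSet_E (n : ℕ) : MeasurableSet (E n) :=
    (measurableSet_le hϑ.1 measurable_const).inter
      (measurableSet_le (hϑ.1.comp measurable_neg) measurable_const)
  have iUnion_E : ⋃ n, E n = Set.univ := by
    refine Set.eq_univ_of_forall fun x => Set.mem_iUnion.2 ?_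
    obtain ⟨n, hn⟩ := exists_nat_ge (max (ϑ x) (ϑ (-x)))
    exact ⟨n, (le_max_left _ _).trans hn, (le_max_right _ _).trans hn⟩
  obtain ⟨n, hn⟩ := exists_pos_measure_of_cover (μ := volume) iUnion_E (NeZero.ne _)
  obtain ⟨ε, hε, hball⟩ := Metric.mem_nhds_iff.1
    (volume.sub_mem_nhds_zero_of_addHaar_pos (E n) (measurableSet_E n) hn)
  refine ⟨n * n, ε, hε, fun x hx => ?_⟩
  obtain ⟨a, ha, b, hb, rfl⟩ := Set.mem_sub.1 (hball hx)
  rw [sub_eq_add_neg]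
  calc ϑ (a + -b) ≤ ϑ a * ϑ (-b) := hϑ.2.2 _ _
    _ ≤ n * n := mul_le_mul ha.1 hb.2 (zero_le_one.trans (hϑ.2.1 _)) n.cast_nonneg

lemma isExpWeight (hϑ : IsBeurling ϑ) : IsExpWeight ϑ := by
  refine ⟨hϑ.1, fun x => one_pos.trans_le (hϑ.2.1 x), ?_⟩
  obtain ⟨M, ε, hε, hM⟩ := hϑ.exists_forall_mem_ball_le
  have one_le_M : 1 ≤ M := (hϑ.2.1 0).trans (hM 0 (Metric.mem_ball_self hε))
  have log_nonneg : 0 ≤ Real.log M := Real.log_nonneg one_le_M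
  refine ⟨M.toNNReal, (Real.log M / ε).toNNReal, fun x => ?_⟩
  rw [Real.coe_toNNReal _ (by positivity), Real.coe_toNNReal _ (by positivity)]
  set k := ⌊‖x‖ / ε⌋₊
  set y : Fin d → ℝ := ((k + 1 : ℕ) : ℝ)⁻¹ • x
  have x_eq : x = (k + 1) • y := by
    rw [← Nat.cast_smul_eq_nsmul ℝ, smul_inv_smul₀ (by positivity)]
  have y_mem : y ∈ Metric.ball 0 ε := by
    have : ‖x‖ < (k + 1) * ε := (div_lt_iff₀ hε).1 (Nat.lt_floor_add_one _)
    rw [mem_ball_zero_iff, norm_smul, norm_inv, Real.norm_natCast, inv_mul_lt_iff₀ (by positivity)]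
    exact_mod_cast this
  calc ϑ x ≤ ϑ y ^ (k + 1) := x_eq ▸ hϑ.succ_nsmul_le_pow y k
    _ ≤ M ^ (k + 1) := pow_le_pow_left₀ (zero_le_one.trans (hϑ.2.1 y)) (hM y y_mem) _
    _ = M * Real.exp (Real.log M * k) := by
      rw [pow_succ', ← Real.rpow_natCast, Real.rpow_def_of_pos (by positivity)]
    _ ≤ M * Real.exp (Real.log M * (‖x‖ / ε)) := by
      gcongr
      exact Nat.floor_le (by positivity)
    _ = M * Real.exp (Real.log M / ε * ‖x‖) := by rw [mul_div_left_comm, mul_comm ‖x‖]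

lemma isModerateWeight (hϑ : IsBeurling ϑ) : IsModerateWeight ϑ :=
  ⟨hϑ.1, hϑ.2.1, ϑ, hϑ.isExpWeight, hϑ.2.2⟩

end IsBeurling

lemma exists_summable_mul_and_pow_le_mul_of_not_prec (h₁ : ∀ x, 1 ≤ ϑ₁ x) (h : ¬ Prec ϑ₂ ϑ₁) :
    ∃ (c : ℕ → ℝ≥0) (X : ℕ → Fin d → ℝ),
      Summable (fun n => c n * ϑ₁ (X n)) ∧ ∀ n, (2 : ℝ) ^ n ≤ c n * ϑ₂ (X n) := by
  have exists_lt (n : ℕ) : ∃ x, 4 ^ n * ϑ₁ x < ϑ₂ x := by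
    by_contra! hle
    exact h ⟨4 ^ n, by positivity, hle⟩
  choose X hX using exists_lt
  have pos (n : ℕ) : 0 < ϑ₁ (X n) := one_pos.trans_le (h₁ _)
  refine ⟨fun n => ⟨(1 / 2) ^ n / ϑ₁ (X n), div_nonneg (by positivity) (pos n).le⟩, X, ?_,
    fun n => ?_⟩
  · exact summable_geometric_two.congr fun n => (div_mul_cancel₀ _ (pos n).ne').symm
  · have := pos n
    calc (2 : ℝ) ^ n = (1 / 2 * 4) ^ n := by norm_num
      _ = (1 / 2) ^ n / ϑ₁ (X n) * (4 ^ n * ϑ₁ (X n)) := by rw [mul_pow]; field_simp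
      _ ≤ (1 / 2) ^ n / ϑ₁ (X n) * ϑ₂ (X n) := by gcongr; exact (hX n).le

end Weights

/-! ### Exponential decay -/

section ExpDecay

variable {E : Type*} [NormedAddCommGroup E]

/-- The function `x ↦ exp (-‖x‖)`. It is integrable and, unlike a Gaussian, varies by a bounded
factor on unit balls, which lets integrals control amalgam norms. -/
noncomputable def expDecay (x : E) : ℝ≥0∞ := ENNReal.ofReal (Real.exp (-‖x‖))

lemma expDecay_le_mul {x y : E} (hxy : ‖x - y‖ ≤ 1) :
    expDecay x ≤ (Real.exp 1).toNNReal * expDecay y := by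
  rw [expDecay, expDecay, ← ENNReal.ofReal, ← ENNReal.ofReal_mul (Real.exp_pos 1).le,
    ← Real.exp_add]
  refine ENNReal.ofReal_le_ofReal (Real.exp_le_exp.2 ?_)
  linarith [norm_sub_norm_le y x, norm_sub_rev x y]

variable [MeasurableSpace E] [BorelSpace E]

lemma measurable_expDecay : Measurable (expDecay : E → ℝ≥0∞) := by
  unfold expDecay
  fun_prop

variable [NormedSpace ℝ E] [FiniteDimensional ℝ E] (μ : Measure E) [μ.IsAddHaarMeasure]

lemma integrable_exp_neg_mul_norm {b : ℝ} (hb : 0 < b) :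
    Integrable (fun x : E => Real.exp (-(b * ‖x‖))) μ := by
  set n := Module.finrank ℝ E + 1
  have integrable_rpow : Integrable (fun x : E => (1 + ‖x‖) ^ (-(n : ℝ))) μ :=
    integrable_one_add_norm (by simp [n])
  refine (integrable_rpow.const_mul (Real.exp b * n.factorial / b ^ n)).mono'
    (by fun_prop) (.of_forall fun x => ?_)
  have pow_le : (b * (1 + ‖x‖)) ^ n ≤ Real.exp b * Real.exp (b * ‖x‖) * n.factorial := by
    rw [← div_le_iff₀ (by positivity), ← Real.exp_add, ← mul_one_add]
    exact Real.pow_div_factorial_le_exp _ (by positivity) n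
  calc ‖Real.exp (-(b * ‖x‖))‖ = (Real.exp (b * ‖x‖))⁻¹ := by
        rw [Real.norm_of_nonneg (Real.exp_pos _).le, Real.exp_neg]
    _ ≤ Real.exp b * n.factorial / (b * (1 + ‖x‖)) ^ n := by
        rw [inv_le_comm₀ (Real.exp_pos _) (by positivity), inv_div, div_le_iff₀ (by positivity)]
        linarith
    _ = Real.exp b * n.factorial / b ^ n * (1 + ‖x‖) ^ (-(n : ℝ)) := by
        rw [mul_pow, ← div_div, Real.rpow_neg (by positivity), Real.rpow_natCast,
          div_eq_mul_inv _ ((1 + ‖x‖) ^ n)]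

lemma lintegral_expDecay_rpow_lt_top {b : ℝ} (hb : 0 < b) :
    ∫⁻ x : E, expDecay x ^ b ∂μ < ⊤ := by
  have expDecay_rpow (x : E) : expDecay x ^ b = ENNReal.ofReal (Real.exp (-(b * ‖x‖))) := by
    rw [expDecay, ENNReal.ofReal_rpow_of_pos (Real.exp_pos _), ← Real.exp_mul, neg_mul, mul_comm]
  simp_rw [expDecay_rpow]
  exact (integrable_exp_neg_mul_norm μ hb).lintegral_lt_top

end ExpDecay

/-! ### Amalgam norms -/

section Amalgam

variable {d : ℕ} {p q : ℝ} {w w' : (Fin d → ℝ) → ℝ} {f : (Fin d → ℝ) → ℂ} {x y : Fin d → ℝ}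
  {α : Fin d → ℤ}

lemma mem_cube_iff : x ∈ cube α ↔ ∀ i, ⌊x i⌋ = α i := by
  simp [cube, Int.floor_eq_iff]

lemma measurableSet_cube (α : Fin d → ℤ) : MeasurableSet (cube α) :=
  MeasurableSet.univ_pi fun _ => measurableSet_Ico

lemma volume_cube (α : Fin d → ℤ) : volume (cube α) = 1 := by
  simp [cube, Real.volume_pi_Ico]

lemma pairwise_disjoint_cube : Pairwise (Function.onFun Disjoint (cube (d := d))) := by
  intro α β hαβ
  refine Set.disjoint_left.2 fun x hα hβ => hαβ (funext fun i => ?_)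
  rw [← mem_cube_iff.1 hα i, mem_cube_iff.1 hβ i]

lemma norm_sub_le_one_of_mem_cube (hx : x ∈ cube α) (hy : y ∈ cube α) : ‖x - y‖ ≤ 1 := by
  refine (pi_norm_le_iff_of_nonneg zero_le_one).2 fun i => ?_
  have hxi := hx i (Set.mem_univ i)
  have hyi := hy i (Set.mem_univ i)
  rw [Pi.sub_apply, Real.norm_eq_abs, abs_le]
  constructor <;> linarith [hxi.1, hxi.2, hyi.1, hyi.2]

lemma eLpNorm_cube_le {a : ℝ≥0∞} (h : ∀ x ∈ cube α, ‖f x‖ₑ ≤ a) (p : ℝ≥0∞) :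
    eLpNorm f p (volume.restrict (cube α)) ≤ a := by
  simpa [volume_cube] using
    eLpNorm_le_of_ae_enorm_bound (μ := volume.restrict (cube α)) (p := p)
      (ae_restrict_of_forall_mem (measurableSet_cube α) h)

lemma amalgamNorm_le_mul_lintegral (hq : 0 < q) {φ : (Fin d → ℝ) → ℝ≥0∞} {C : ℝ≥0}
    (hφ : ∀ x y, ‖x - y‖ ≤ 1 → φ x ≤ C * φ y) (hf : ∀ x, ‖w x • f x‖ₑ ≤ φ x) :
    amalgamNorm p q w f ≤ (C ^ q * ∫⁻ x, φ x ^ q) ^ (1 / q) := by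
  have eLpNorm_rpow_le (α : Fin d → ℤ) :
      eLpNorm (fun x => w x • f x) (ENNReal.ofReal p) (volume.restrict (cube α)) ^ q ≤
        ∫⁻ y in cube α, (C * φ y) ^ q := by
    rw [← mul_one (eLpNorm _ _ _ ^ q), ← volume_cube α, ← setLIntegral_const]
    refine setLIntegral_mono' (measurableSet_cube α) fun y hy => ?_
    gcongr
    exact eLpNorm_cube_le (fun x hx =>
      (hf x).trans (hφ x y (norm_sub_le_one_of_mem_cube hx hy))) _
  refine ENNReal.rpow_le_rpow ?_ (by positivity)
  calc ∑' α, eLpNorm (fun x => w x • f x) (ENNReal.ofReal p) (volume.restrict (cube α)) ^ q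
      ≤ ∑' α, ∫⁻ y in cube α, (C * φ y) ^ q := ENNReal.tsum_le_tsum eLpNorm_rpow_le
    _ = ∫⁻ y in ⋃ α, cube α, (C * φ y) ^ q :=
      (lintegral_iUnion measurableSet_cube pairwise_disjoint_cube _).symm
    _ ≤ ∫⁻ y, (C * φ y) ^ q := setLIntegral_le_lintegral _ _
    _ = C ^ q * ∫⁻ y, φ y ^ q := by
      simp_rw [ENNReal.mul_rpow_of_nonneg _ _ hq.le]
      exact lintegral_const_mul' _ _ (by finiteness)

lemma le_mul_amalgamNorm (hp : 0 < p) (hq : 0 < q) {a : ℝ≥0∞} {C : ℝ≥0}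
    (h : ∀ x ∈ cube α, a ≤ C * ‖w x • f x‖ₑ) : a ≤ C * amalgamNorm p q w f := by
  have eLpNorm_const_eq :
      eLpNorm (fun _ => a) (ENNReal.ofReal p) (volume.restrict (cube α)) = a := by
    rw [eLpNorm_const' _ (by simpa using hp) ENNReal.ofReal_ne_top]
    simp [volume_cube]
  calc a = eLpNorm (fun _ => a) (ENNReal.ofReal p) (volume.restrict (cube α)) :=
        eLpNorm_const_eq.symm
    _ ≤ C * eLpNorm (fun x => w x • f x) (ENNReal.ofReal p) (volume.restrict (cube α)) :=
      eLpNorm_le_mul_eLpNorm_of_ae_le_mul' (ae_restrict_of_forall_mem (measurableSet_cube α) h) _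
    _ ≤ C * amalgamNorm p q w f := by
      gcongr
      rw [amalgamNorm, one_div, ENNReal.le_rpow_inv_iff hq]
      exact ENNReal.le_tsum α

lemma amalgamNorm_le_mul_of_le (hq : 0 < q) {C : ℝ≥0} (h : ∀ x, ‖w x‖ ≤ C * ‖w' x‖) :
    amalgamNorm p q w f ≤ C * amalgamNorm p q w' f := by
  have eLpNorm_le (α : Fin d → ℤ) :
      eLpNorm (fun x => w x • f x) (ENNReal.ofReal p) (volume.restrict (cube α)) ≤
        C * eLpNorm (fun x => w' x • f x) (ENNReal.ofReal p) (volume.restrict (cube α)) := by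
    refine eLpNorm_le_nnreal_smul_eLpNorm_of_ae_le_mul (.of_forall fun x => ?_) _
    rw [nnnorm_smul, nnnorm_smul, ← mul_assoc]
    gcongr
    exact h x
  rw [amalgamNorm, amalgamNorm, one_div, ENNReal.rpow_inv_le_iff hq,
    ENNReal.mul_rpow_of_nonneg _ _ hq.le, ENNReal.rpow_inv_rpow hq.ne', ← ENNReal.tsum_mul_left]
  refine ENNReal.tsum_le_tsum fun α => ?_
  rw [← ENNReal.mul_rpow_of_nonneg _ _ hq.le]
  gcongr
  exact eLpNorm_le α

lemma MemA.of_prec {r : ℝ} {ϑ : (Fin d → ℝ) → ℝ} (hw : ∀ x, 0 ≤ w x) (h : Prec w w')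
    (hf : MemA p q r w' ϑ f) : MemA p q r w ϑ f := by
  obtain ⟨C, hC, hle⟩ := h
  refine ⟨⟨hf.1.1, (amalgamNorm_le_mul_of_le (C := ⟨C, hC.le⟩) one_pos fun x => ?_).trans_lt
    (ENNReal.mul_lt_top ENNReal.coe_lt_top hf.1.2)⟩, hf.2⟩
  rw [Real.norm_of_nonneg (hw x)]
  exact (hle x).trans (mul_le_mul_of_nonneg_left (Real.le_norm_self _) hC.le)

end Amalgam

/-! ### The Fourier transform -/

section Fourier

variable {d : ℕ}

lemma fourierT_eq_fourierIntegral (f : (Fin d → ℝ) → ℂ) :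
    fourierT f = VectorFourier.fourierIntegral Real.fourierChar volume (dotProductBilin ℝ ℝ) f := by
  ext ξ
  refine integral_congr_ae (.of_forall fun x => ?_)
  simp only [Circle.smul_def, Real.fourierChar_apply, smul_eq_mul, dotProductBilin_apply_apply,
    dotProduct]
  congr 2
  push_cast
  ring

lemma continuous_dotProductBilin :
    Continuous fun z : (Fin d → ℝ) × (Fin d → ℝ) => dotProductBilin ℝ ℝ z.1 z.2 := by
  simp only [dotProductBilin_apply_apply]
  fun_prop

lemma measurable_fourierT {f : (Fin d → ℝ) → ℂ} (hf : Measurable f) : Measurable (fourierT f) := by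
  have stronglyMeasurable_integrand :
      StronglyMeasurable fun z : (Fin d → ℝ) × (Fin d → ℝ) =>
        Complex.exp (-(2 * (Real.pi : ℂ) * Complex.I * ∑ i, (z.2 i : ℂ) * (z.1 i : ℂ))) * f z.2 :=
    Measurable.stronglyMeasurable (by fun_prop)
  exact stronglyMeasurable_integrand.integral_prod_right'.measurable

lemma fourierT_const_mul (c : ℂ) (f : (Fin d → ℝ) → ℂ) (ξ : Fin d → ℝ) :
    fourierT (fun x => c * f x) ξ = c * fourierT f ξ := by
  simp only [fourierT, mul_left_comm _ c, integral_const_mul]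

lemma enorm_fourierT_comp_sub_right (f : (Fin d → ℝ) → ℂ) (a ξ : Fin d → ℝ) :
    ‖fourierT (fun x => f (x - a)) ξ‖ₑ = ‖fourierT f ξ‖ₑ := by
  have translate := congrFun (VectorFourier.fourierIntegral_comp_add_right Real.fourierChar volume
    (dotProductBilin ℝ ℝ) f (-a)) ξ
  simp only [Function.comp_def, ← sub_eq_add_neg] at translate
  rw [fourierT_eq_fourierIntegral, fourierT_eq_fourierIntegral, translate, ← ofReal_norm,
    Circle.norm_smul, ofReal_norm]

lemma enorm_fourierT_tsum_le {ι : Type*} [Countable ι] {F : ι → (Fin d → ℝ) → ℂ}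
    (hF : ∀ n, Integrable (F n)) (hF' : Summable fun n => ∫ x, ‖F n x‖) (ξ : Fin d → ℝ) :
    ‖fourierT (fun x => ∑' n, F n x) ξ‖ₑ ≤ ∑' n, ‖fourierT (F n) ξ‖ₑ := by
  have fourierT_tsum : fourierT (fun x => ∑' n, F n x) ξ = ∑' n, fourierT (F n) ξ := by
    simp only [fourierT_eq_fourierIntegral, VectorFourier.fourierIntegral]
    rw [integral_tsum_of_summable_integral_norm
      (fun n => (VectorFourier.fourierIntegral_convergent_iff Real.continuous_fourierChar
        continuous_dotProductBilin ξ).2 (hF n)) (by simpa only [Circle.norm_smul] using hF')]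
    exact integral_congr_ae (.of_forall fun x => (tsum_const_smul' _).symm)
  rw [fourierT_tsum]
  exact enorm_tsum_le_tsum_enorm

end Fourier

/-! ### Gaussians -/

section Gaussian

variable {d : ℕ} {x : Fin d → ℝ}

/-- The Gaussian `exp (-π |x|²)` of the Euclidean norm, which is its own Fourier transform. -/
noncomputable def gaussian (x : Fin d → ℝ) : ℝ := Real.exp (-Real.pi * ∑ i, x i ^ 2)

lemma gaussian_pos (x : Fin d → ℝ) : 0 < gaussian x := Real.exp_pos _

lemma gaussian_le_one (x : Fin d → ℝ) : gaussian x ≤ 1 := by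
  refine Real.exp_le_one_iff.2 ?_
  rw [neg_mul, neg_nonpos]
  positivity

lemma continuous_gaussian : Continuous (gaussian : (Fin d → ℝ) → ℝ) := by
  unfold gaussian
  fun_prop

lemma gaussian_le_exp_norm_sq (x : Fin d → ℝ) : gaussian x ≤ Real.exp (-Real.pi * ‖x‖ ^ 2) := by
  have norm_le_sqrt : ‖x‖ ≤ √(∑ i, x i ^ 2) :=
    (pi_norm_le_iff_of_nonneg (Real.sqrt_nonneg _)).2 fun i =>
      Real.abs_le_sqrt (Finset.single_le_sum (fun j _ => sq_nonneg (x j)) (Finset.mem_univ i))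
  have norm_sq_le := (Real.le_sqrt (norm_nonneg x) (by positivity)).1 norm_le_sqrt
  exact Real.exp_le_exp.2 (mul_le_mul_of_nonpos_left norm_sq_le (neg_nonpos.2 Real.pi_nonneg))

lemma exp_le_gaussian (hx : ‖x‖ ≤ 1) : Real.exp (-Real.pi * d) ≤ gaussian x := by
  refine Real.exp_le_exp.2 (mul_le_mul_of_nonpos_left ?_ (neg_nonpos.2 Real.pi_nonneg))
  calc ∑ i, x i ^ 2 ≤ ∑ _ : Fin d, (1 : ℝ) :=
        Finset.sum_le_sum fun i _ => (sq_le_one_iff_abs_le_one _).2 ((norm_le_pi_norm x i).trans hx)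
    _ = d := by simp

lemma integrable_gaussian : Integrable (gaussian : (Fin d → ℝ) → ℝ) := by
  have integrable_cexp := GaussianFourier.integrable_cexp_neg_mul_sum_add (ι := Fin d)
    (b := (Real.pi : ℂ)) (by simpa using Real.pi_pos) 0
  refine integrable_cexp.re.congr (.of_forall fun x => ?_)
  simp only [gaussian, Pi.zero_apply, zero_mul, Finset.sum_const_zero, add_zero]
  rw [← Complex.ofReal_re (Real.exp _)]
  push_cast
  rfl

lemma fourierT_gaussian (ξ : Fin d → ℝ) : fourierT (fun x => (gaussian x : ℂ)) ξ = gaussian ξ := by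
  have pi_ne_zero : (Real.pi : ℂ) ≠ 0 := Complex.ofReal_ne_zero.2 Real.pi_ne_zero
  have integral_eq := GaussianFourier.integral_cexp_neg_mul_sum_add (ι := Fin d)
    (b := (Real.pi : ℂ)) (by simpa using Real.pi_pos) (fun i => -(2 * Real.pi * Complex.I) * ξ i)
  rw [div_self pi_ne_zero, Complex.one_cpow, one_mul] at integral_eq
  calc fourierT (fun x => (gaussian x : ℂ)) ξ
      = ∫ x : Fin d → ℝ, Complex.exp (-(Real.pi : ℂ) * ∑ i, (x i : ℂ) ^ 2
          + ∑ i, -(2 * Real.pi * Complex.I) * ξ i * x i) := by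
        refine integral_congr_ae (.of_forall fun x => ?_)
        simp only [gaussian, Complex.ofReal_exp, ← Complex.exp_add]
        congr 1
        push_cast
        rw [add_comm, ← neg_mul, Finset.mul_sum (f := fun i => (x i : ℂ) * ξ i)]
        simp only [mul_assoc, mul_comm (x _ : ℂ)]
    _ = gaussian ξ := by
        rw [integral_eq, gaussian, Complex.ofReal_exp]
        congr 1
        push_cast
        simp only [mul_pow, neg_sq, Complex.I_sq, ← Finset.mul_sum]
        field_simp
        ring

lemma IsExpWeight.exists_enorm_mul_gaussian_le {w : (Fin d → ℝ) → ℝ} (hw : IsExpWeight w) :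
    ∃ K : ℝ≥0, ∀ x, ‖w x‖ₑ * ‖gaussian x‖ₑ ≤ K * expDecay x := by
  obtain ⟨A, B, hAB⟩ := hw.exists_le_exp
  refine ⟨A * (Real.exp ((B + 1) ^ 2)).toNNReal, fun x => ?_⟩
  have real_bound : w x * gaussian x ≤ A * Real.exp ((B + 1) ^ 2) * Real.exp (-‖x‖) := by
    calc w x * gaussian x
        ≤ A * Real.exp (B * ‖x‖) * Real.exp (-Real.pi * ‖x‖ ^ 2) :=
          mul_le_mul (hAB x) (gaussian_le_exp_norm_sq x) (gaussian_pos x).le (by positivity)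
      _ = A * Real.exp (B * ‖x‖ - Real.pi * ‖x‖ ^ 2) := by
          rw [mul_assoc, ← Real.exp_add, neg_mul, ← sub_eq_add_neg]
      _ ≤ A * Real.exp ((B + 1) ^ 2 - ‖x‖) := by
          refine mul_le_mul_of_nonneg_left (Real.exp_le_exp.2 ?_) A.coe_nonneg
          nlinarith [sq_nonneg (‖x‖ - (B + 1)), sq_nonneg ‖x‖, Real.pi_gt_three]
      _ = A * Real.exp ((B + 1) ^ 2) * Real.exp (-‖x‖) := by
          rw [mul_assoc, ← Real.exp_add, sub_eq_add_neg]
  rw [Real.enorm_eq_ofReal (hw.pos x).le, Real.enorm_eq_ofReal (gaussian_pos x).le,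
    ← ENNReal.ofReal_mul (hw.pos x).le]
  refine (ENNReal.ofReal_le_ofReal real_bound).trans_eq ?_
  rw [ENNReal.ofReal_mul (by positivity), ENNReal.ofReal_mul A.coe_nonneg,
    ENNReal.ofReal_coe_nnreal, ENNReal.coe_mul, expDecay, ENNReal.ofReal]

end Gaussian

/-! ### Sums of translated Gaussians -/

section GaussianSum

variable {d : ℕ} {ι : Type*} {p q : ℝ} {w : (Fin d → ℝ) → ℝ} {c : ι → ℝ≥0} {X : ι → Fin d → ℝ}

/-- The superposition `∑ c n * gaussian (x - X n)` of Gaussians centred at the points `X n`. -/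
noncomputable def gaussianSum (c : ι → ℝ≥0) (X : ι → Fin d → ℝ) (x : Fin d → ℝ) : ℂ :=
  ∑' n, (c n : ℂ) * gaussian (x - X n)

lemma norm_coe_mul_ofReal (a : ℝ≥0) (t : ℝ) : ‖(a : ℂ) * t‖ = a * ‖t‖ := by
  rw [norm_mul, Complex.norm_real, Complex.norm_real, NNReal.norm_eq]

lemma enorm_coe_mul_ofReal (a : ℝ≥0) (t : ℝ) : ‖(a : ℂ) * t‖ₑ = a * ‖t‖ₑ := by
  rw [← ofReal_norm, norm_coe_mul_ofReal, ENNReal.ofReal_mul a.coe_nonneg,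
    ENNReal.ofReal_coe_nnreal, ofReal_norm]

lemma continuous_gaussianSum (hc : Summable c) : Continuous (gaussianSum c X) :=
  continuous_tsum
    (fun n => continuous_const.mul
      (Complex.continuous_ofReal.comp (continuous_gaussian.comp (continuous_sub_right (X n)))))
    (NNReal.summable_coe.2 hc) fun n x => by
      rw [norm_coe_mul_ofReal, Real.norm_of_nonneg (gaussian_pos _).le]
      exact mul_le_of_le_one_right (c n).coe_nonneg (gaussian_le_one _)

lemma mul_gaussian_le_norm_gaussianSum (hc : Summable c) (n : ι) (x : Fin d → ℝ) :
    c n * gaussian (x - X n) ≤ ‖gaussianSum c X x‖ := by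
  have term_nonneg (m : ι) : 0 ≤ c m * gaussian (x - X m) :=
    mul_nonneg (c m).coe_nonneg (gaussian_pos _).le
  have summable_term : Summable fun m => c m * gaussian (x - X m) :=
    (NNReal.summable_coe.2 hc).of_nonneg_of_le term_nonneg fun m =>
      mul_le_of_le_one_right (c m).coe_nonneg (gaussian_le_one _)
  have gaussianSum_eq : gaussianSum c X x = ((∑' m, c m * gaussian (x - X m) : ℝ) : ℂ) := by
    rw [Complex.ofReal_tsum]
    simp only [gaussianSum, Complex.ofReal_mul]
  rw [gaussianSum_eq, Complex.norm_real, Real.norm_of_nonneg (tsum_nonneg term_nonneg)]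
  exact summable_term.le_tsum n fun m _ => term_nonneg m

lemma IsModerateWeight.exists_le_mul_amalgamNorm_gaussianSum (hw : IsModerateWeight w) (hp : 0 < p)
    (hq : 0 < q) (hc : Summable c) (X : ι → Fin d → ℝ) :
    ∃ K : ℝ≥0, ∀ n, ENNReal.ofReal (c n * w (X n)) ≤ K * amalgamNorm p q w (gaussianSum c X) := by
  obtain ⟨v, hv, hwv⟩ := hw.exists_add_le_mul
  obtain ⟨A, B, hAB⟩ := hv.exists_le_exp
  refine ⟨(A * Real.exp B * Real.exp (Real.pi * d)).toNNReal, fun n => ?_⟩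
  refine le_mul_amalgamNorm (α := fun i => ⌊X n i⌋) hp hq fun x hx => ?_
  have norm_le_one : ‖x - X n‖ ≤ 1 :=
    norm_sub_le_one_of_mem_cube hx (mem_cube_iff.2 fun _ => rfl)
  have weight_le : w (X n) ≤ w x * (A * Real.exp B) := by
    calc w (X n) = w (x + (X n - x)) := by rw [add_sub_cancel]
      _ ≤ w x * v (X n - x) := hwv _ _
      _ ≤ w x * (A * Real.exp B) := by
        have := (hw.pos x).le
        gcongr
        refine (hAB _).trans ?_
        gcongr
        rw [norm_sub_rev]
        exact mul_le_of_le_one_right B.coe_nonneg norm_le_one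
  have coeff_le : c n ≤ Real.exp (Real.pi * d) * ‖gaussianSum c X x‖ := by
    rw [← inv_mul_le_iff₀ (Real.exp_pos _), ← Real.exp_neg, ← neg_mul, mul_comm]
    exact (mul_le_mul_of_nonneg_left (exp_le_gaussian norm_le_one) (c n).coe_nonneg).trans
      (mul_gaussian_le_norm_gaussianSum hc n x)
  rw [← ofReal_norm, norm_smul, Real.norm_of_nonneg (hw.pos x).le, ← ENNReal.ofReal,
    ← ENNReal.ofReal_mul (by positivity)]
  refine ENNReal.ofReal_le_ofReal ?_
  calc c n * w (X n)
      ≤ (Real.exp (Real.pi * d) * ‖gaussianSum c X x‖) * (w x * (A * Real.exp B)) :=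
        mul_le_mul coeff_le weight_le (hw.pos _).le (by positivity)
    _ = A * Real.exp B * Real.exp (Real.pi * d) * (w x * ‖gaussianSum c X x‖) := by ring

lemma IsModerateWeight.exists_enorm_smul_gaussianSum_le (hw : IsModerateWeight w) :
    ∃ K : ℝ≥0, ∀ (c : ι → ℝ≥0) (X : ι → Fin d → ℝ) (x : Fin d → ℝ), ‖w x • gaussianSum c X x‖ₑ ≤
      ∑' n, ENNReal.ofReal (c n * w (X n)) * (K * expDecay (x - X n)) := by
  obtain ⟨v, hv, hwv⟩ := hw.exists_add_le_mul
  obtain ⟨K, hK⟩ := hv.exists_enorm_mul_gaussian_le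
  refine ⟨K, fun c X x => ?_⟩
  have enorm_weight_le (n : ι) : ‖w x‖ₑ ≤ ‖w (X n)‖ₑ * ‖v (x - X n)‖ₑ := by
    rw [← enorm_mul, Real.enorm_eq_ofReal (hw.pos x).le,
      Real.enorm_eq_ofReal (mul_pos (hw.pos _) (hv.pos _)).le]
    simpa using ENNReal.ofReal_le_ofReal (hwv (X n) (x - X n))
  rw [enorm_smul]
  refine (mul_le_mul_right enorm_tsum_le_tsum_enorm _).trans ?_
  rw [← ENNReal.tsum_mul_left]
  refine ENNReal.tsum_le_tsum fun n => ?_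
  calc ‖w x‖ₑ * ‖(c n : ℂ) * gaussian (x - X n)‖ₑ
      ≤ ‖w (X n)‖ₑ * ‖v (x - X n)‖ₑ * (c n * ‖gaussian (x - X n)‖ₑ) := by
        rw [enorm_coe_mul_ofReal]
        gcongr
        exact enorm_weight_le n
    _ = c n * ‖w (X n)‖ₑ * (‖v (x - X n)‖ₑ * ‖gaussian (x - X n)‖ₑ) := by ring
    _ ≤ c n * ‖w (X n)‖ₑ * (K * expDecay (x - X n)) := mul_le_mul_right (hK _) _
    _ = ENNReal.ofReal (c n * w (X n)) * (K * expDecay (x - X n)) := by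
        rw [ENNReal.ofReal_mul (c n).coe_nonneg, ENNReal.ofReal_coe_nnreal,
          Real.enorm_eq_ofReal (hw.pos _).le]

variable [Countable ι]

lemma IsModerateWeight.memAmalgam_gaussianSum (hw : IsModerateWeight w)
    (hcw : Summable fun n => c n * w (X n)) : MemAmalgam p 1 w (gaussianSum c X) := by
  refine ⟨(continuous_gaussianSum (hw.summable_of_summable_mul hcw)).measurable, ?_⟩
  obtain ⟨K, hK⟩ := hw.exists_enorm_smul_gaussianSum_le (ι := ι)
  set φ : (Fin d → ℝ) → ℝ≥0∞ := fun x =>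
    ∑' n, ENNReal.ofReal (c n * w (X n)) * (K * expDecay (x - X n))
  have φ_le (x y : Fin d → ℝ) (hxy : ‖x - y‖ ≤ 1) : φ x ≤ (Real.exp 1).toNNReal * φ y := by
    have expDecay_sub_le (n : ι) :
        expDecay (x - X n) ≤ (Real.exp 1).toNNReal * expDecay (y - X n) :=
      expDecay_le_mul (by rwa [sub_sub_sub_cancel_right])
    rw [← ENNReal.tsum_mul_left]
    refine ENNReal.tsum_le_tsum fun n => ?_
    calc ENNReal.ofReal (c n * w (X n)) * (K * expDecay (x - X n))
        ≤ ENNReal.ofReal (c n * w (X n)) *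
            (K * ((Real.exp 1).toNNReal * expDecay (y - X n))) :=
          mul_le_mul_right (mul_le_mul_right (expDecay_sub_le n) _) _
      _ = (Real.exp 1).toNNReal *
            (ENNReal.ofReal (c n * w (X n)) * (K * expDecay (y - X n))) := by ring
  have lintegral_φ : ∫⁻ x, φ x = (∑' n, ENNReal.ofReal (c n * w (X n))) *
      (K * ∫⁻ x : Fin d → ℝ, expDecay x) := by
    rw [lintegral_tsum fun n => by
      have := measurable_expDecay (E := Fin d → ℝ)
      fun_prop, ← ENNReal.tsum_mul_right]
    refine tsum_congr fun n => ?_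
    rw [lintegral_const_mul' _ _ ENNReal.ofReal_ne_top, lintegral_const_mul' _ _ ENNReal.coe_ne_top,
      lintegral_sub_right_eq_self]
  refine (amalgamNorm_le_mul_lintegral one_pos φ_le (hK c X)).trans_lt ?_
  have lintegral_expDecay_lt_top : ∫⁻ x : Fin d → ℝ, expDecay x < ⊤ := by
    simpa only [ENNReal.rpow_one] using lintegral_expDecay_rpow_lt_top (volume : Measure _) one_pos
  simp only [div_one, ENNReal.rpow_one, lintegral_φ]
  exact ENNReal.mul_lt_top ENNReal.coe_lt_top (ENNReal.mul_lt_top hcw.tsum_ofReal_lt_top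
    (ENNReal.mul_lt_top ENNReal.coe_lt_top lintegral_expDecay_lt_top))

lemma enorm_fourierT_gaussianSum_le (hc : Summable c) (ξ : Fin d → ℝ) :
    ‖fourierT (gaussianSum c X) ξ‖ₑ ≤ (∑' n, (c n : ℝ≥0∞)) * ‖gaussian ξ‖ₑ := by
  have integrable_term (n : ι) : Integrable fun x => (c n : ℂ) * gaussian (x - X n) :=
    (integrable_gaussian.comp_sub_right (X n)).ofReal.const_mul _
  have integral_norm_term (n : ι) :
      ∫ x, ‖(c n : ℂ) * gaussian (x - X n)‖ = c n * ∫ x : Fin d → ℝ, ‖gaussian x‖ := by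
    simp only [norm_coe_mul_ofReal, integral_const_mul,
      integral_sub_right_eq_self fun x => ‖gaussian x‖]
  have enorm_fourierT_term (n : ι) :
      ‖fourierT (fun x => (c n : ℂ) * gaussian (x - X n)) ξ‖ₑ = c n * ‖gaussian ξ‖ₑ := by
    rw [fourierT_const_mul, enorm_mul, enorm_fourierT_comp_sub_right (fun x => (gaussian x : ℂ)),
      fourierT_gaussian, ← enorm_mul, enorm_coe_mul_ofReal]
  refine (enorm_fourierT_tsum_le integrable_term ?_ ξ).trans_eq ?_
  · simpa only [integral_norm_term] using (NNReal.summable_coe.2 hc).mul_right _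
  · simp only [enorm_fourierT_term, ENNReal.tsum_mul_right]

lemma IsExpWeight.memAmalgam_fourierT_gaussianSum (hw : IsExpWeight w) (hq : 0 < q)
    (hc : Summable c) : MemAmalgam p q w (fourierT (gaussianSum c X)) := by
  refine ⟨measurable_fourierT (continuous_gaussianSum hc).measurable, ?_⟩
  obtain ⟨K, hK⟩ := hw.exists_enorm_mul_gaussian_le
  set T : ℝ≥0∞ := (∑' n, (c n : ℝ≥0∞)) * K
  have T_ne_top : T ≠ ⊤ :=
    ENNReal.mul_ne_top (ENNReal.tsum_coe_ne_top_iff_summable.2 hc) ENNReal.coe_ne_top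
  have enorm_le (ξ : Fin d → ℝ) : ‖w ξ • fourierT (gaussianSum c X) ξ‖ₑ ≤ T * expDecay ξ := by
    calc ‖w ξ • fourierT (gaussianSum c X) ξ‖ₑ
        ≤ ‖w ξ‖ₑ * ((∑' n, (c n : ℝ≥0∞)) * ‖gaussian ξ‖ₑ) := by
          rw [enorm_smul]
          gcongr
          exact enorm_fourierT_gaussianSum_le hc ξ
      _ = (∑' n, (c n : ℝ≥0∞)) * (‖w ξ‖ₑ * ‖gaussian ξ‖ₑ) := by ring
      _ ≤ (∑' n, (c n : ℝ≥0∞)) * (K * expDecay ξ) := mul_le_mul_right (hK ξ) _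
      _ = T * expDecay ξ := (mul_assoc _ _ _).symm
  have slowly_varying (ξ η : Fin d → ℝ) (h : ‖ξ - η‖ ≤ 1) :
      T * expDecay ξ ≤ (Real.exp 1).toNNReal * (T * expDecay η) := by
    rw [mul_left_comm]
    exact mul_le_mul_right (expDecay_le_mul h) _
  refine (amalgamNorm_le_mul_lintegral hq slowly_varying enorm_le).trans_lt ?_
  simp_rw [ENNReal.mul_rpow_of_nonneg _ _ hq.le]
  rw [lintegral_const_mul' _ _ (by finiteness)]
  have := lintegral_expDecay_rpow_lt_top (E := Fin d → ℝ) volume hq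
  finiteness

end GaussianSum

/-! ### Inclusions of the spaces -/

section Inclusion

variable {d : ℕ} {p q r : ℝ} {ϑ ϑ₁ ϑ₂ : (Fin d → ℝ) → ℝ}

theorem prec_of_forall_memA_imp (hp : 0 < p) (hr : 0 < r) (hϑ : IsExpWeight ϑ)
    (h₁ : IsModerateWeight ϑ₁) (h₂ : IsModerateWeight ϑ₂)
    (h : ∀ f : (Fin d → ℝ) → ℂ, MemA p q r ϑ₁ ϑ f → MemA p q r ϑ₂ ϑ f) : Prec ϑ₂ ϑ₁ := by
  by_contra hprec
  obtain ⟨c, X, hc₁, hc₂⟩ := exists_summable_mul_and_pow_le_mul_of_not_prec h₁.one_le hprec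
  have hc : Summable c := h₁.summable_of_summable_mul hc₁
  have mem₂ : MemA p q r ϑ₂ ϑ (gaussianSum c X) :=
    h _ ⟨h₁.memAmalgam_gaussianSum hc₁, hϑ.memAmalgam_fourierT_gaussianSum hr hc⟩
  obtain ⟨K, hK⟩ := h₂.exists_le_mul_amalgamNorm_gaussianSum hp one_pos hc X
  set N := K * amalgamNorm p 1 ϑ₂ (gaussianSum c X)
  have N_ne_top : N ≠ ⊤ := ENNReal.mul_ne_top ENNReal.coe_ne_top mem₂.1.2.ne
  obtain ⟨n, hn⟩ := pow_unbounded_of_one_lt N.toReal one_lt_two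
  exact hn.not_ge ((hc₂ n).trans ((ENNReal.ofReal_le_iff_le_toReal N_ne_top).1 (hK n)))

theorem forall_memA_imp_iff_prec (hp : 0 < p) (hr : 0 < r) (hϑ : IsExpWeight ϑ)
    (h₁ : IsModerateWeight ϑ₁) (h₂ : IsModerateWeight ϑ₂) :
    (∀ f : (Fin d → ℝ) → ℂ, MemA p q r ϑ₁ ϑ f → MemA p q r ϑ₂ ϑ f) ↔ Prec ϑ₂ ϑ₁ :=
  ⟨prec_of_forall_memA_imp hp hr hϑ h₁ h₂, fun h _ => MemA.of_prec (fun x => (h₂.pos x).le) h⟩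

end Inclusion

theorem A_equality_iff_general {d : ℕ} (p q r : ℝ) (hp : 1 ≤ p) (_hq : 0 < q) (hr : 0 < r)
    (ϑ ϑ₁ ϑ₂ : (Fin d → ℝ) → ℝ)
    (hϑ : IsExpWeight ϑ) (h₁ : IsModerateWeight ϑ₁) (h₂ : IsModerateWeight ϑ₂) :
    (∀ f : (Fin d → ℝ) → ℂ, MemA p q r ϑ₁ ϑ f ↔ MemA p q r ϑ₂ ϑ f) ↔
    (Prec ϑ₁ ϑ₂ ∧ Prec ϑ₂ ϑ₁) := by
  have hp' : 0 < p := one_pos.trans_le hp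
  rw [← forall_memA_imp_iff_prec (q := q) hp' hr hϑ h₁ h₂,
    ← forall_memA_imp_iff_prec (q := q) hp' hr hϑ h₂ h₁, and_comm, ← forall_and]
  simp only [iff_iff_implies_and_implies]

/-- `A^{p,1,q,r}_{ϑ₁,ϑ}(ℝ^d) = A^{p,1,q,r}_{ϑ₂,ϑ}(ℝ^d)` as sets
if and only if the weights `ϑ₁` and `ϑ₂` are equivalent. -/
theorem A_equality_iff {d : ℕ} (p q r : ℝ) (hp : 1 ≤ p) (hq : 1 ≤ q) (hr : 1 ≤ r)
    (ϑ ϑ₁ ϑ₂ : (Fin d → ℝ) → ℝ)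
    (hϑ : IsBeurling ϑ) (h1 : IsBeurling ϑ₁) (h2 : IsBeurling ϑ₂) :
    (∀ f : (Fin d → ℝ) → ℂ, MemA p q r ϑ₁ ϑ f ↔ MemA p q r ϑ₂ ϑ f) ↔
    (Prec ϑ₁ ϑ₂ ∧ Prec ϑ₂ ϑ₁) :=
  A_equality_iff_general p q r hp (one_pos.trans_le hq) (one_pos.trans_le hr) ϑ ϑ₁ ϑ₂
    hϑ.isExpWeight h1.isModerateWeight h2.isModerateWeight
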